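/- Upward-crossing segment bound: suppose 0 ≤ τ_l < τ_r ≤ T, Δ(τ_l) = −β, Δ(τ_r) = 0, and −β < Δ(t) < 0 for all t with τ_l < t < τ_r. Then Σ_{t=τ_l+1}^{τ_r−1} ( g_t(0) − g_t(1) ) ≤ β. -/

import Mathlib

/-- The cumulative cost difference `Δ(t)`, with `Δ(0) = −β` and
`Δ(t) = min{0, max{−β, Δ(t−1) + (g_t(0) − g_t(1))}}`. -/
noncomputable def Δfun (β : ℝ) (g0 g1 : ℕ → ℝ) : ℕ → ℝ
  | 0 => -β
  | t + 1 => min 0 (max (-β) (Δfun β g0 g1 t + (g0 (t + 1) - g1 (t + 1))))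

/-- upward-crossing segment bound: if `Δ(τ_l) = −β`,
`Δ(τ_r) = 0` and `−β < Δ(t) < 0` strictly inside the segment, then
`Σ_{t=τ_l+1}^{τ_r−1} (g_t(0) − g_t(1)) ≤ β`. -/
theorem stmt16 (T : ℕ) (β : ℝ) (hβ : 0 ≤ β) (g0 g1 : ℕ → ℝ)
    (hg0 : ∀ t, 1 ≤ t → t ≤ T → 0 ≤ g0 t) (hg1 : ∀ t, 1 ≤ t → t ≤ T → 0 ≤ g1 t)
    (τl τr : ℕ) (hlr : τl < τr) (hrT : τr ≤ T)
    (hl : Δfun β g0 g1 τl = -β) (hr : Δfun β g0 g1 τr = 0)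
    (hmid : ∀ t, τl < t → t < τr → -β < Δfun β g0 g1 t ∧ Δfun β g0 g1 t < 0) :
    ∑ t ∈ Finset.Ioo τl τr, (g0 t - g1 t) ≤ β := by
  have key : ∀ n, τl + n < τr →
      ∑ t ∈ Finset.Ioo τl (τl + n + 1), (g0 t - g1 t) = Δfun β g0 g1 (τl + n) + β := by
    intro n
    induction n with
    | zero =>
      intro _
      have h : Finset.Ioo τl (τl + 0 + 1) = ∅ := by
        ext x; simp only [Finset.mem_Ioo, Finset.notMem_empty, iff_false]; omega
      rw [h, Finset.sum_empty, Nat.add_zero, hl]; ring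
    | succ n ih =>
      intro hn
      have h : Finset.Ioo τl (τl + (n + 1) + 1)
          = insert (τl + n + 1) (Finset.Ioo τl (τl + n + 1)) := by
        ext x; simp only [Finset.mem_Ioo, Finset.mem_insert]; omega
      rw [h, Finset.sum_insert (by simp), ih (by omega)]
      have hm := hmid (τl + n + 1) (by omega) (by omega)
      have e : Δfun β g0 g1 (τl + n + 1) = min 0 (max (-β)
        (Δfun β g0 g1 (τl + n) + (g0 (τl + n + 1) - g1 (τl + n + 1)))) := rfl
      rw [← Nat.add_assoc]
      rcases min_cases 0 (max (-β)
        (Δfun β g0 g1 (τl + n) + (g0 (τl + n + 1) - g1 (τl + n + 1)))) with h1 | h1 <;>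
      rcases max_cases (-β)
        (Δfun β g0 g1 (τl + n) + (g0 (τl + n + 1) - g1 (τl + n + 1))) with h2 | h2 <;>
      linarith [hm.1, hm.2, h1.1, h2.1]
  obtain ⟨n, rfl⟩ : ∃ n, τr = τl + n + 1 := ⟨τr - τl - 1, by omega⟩
  rw [key n (by omega)]
  have hle : Δfun β g0 g1 (τl + n) ≤ 0 := by
    rcases Nat.eq_zero_or_pos n with rfl | hp
    · rw [Nat.add_zero, hl]; linarith
    · exact (hmid _ (by omega) (by omega)).2.le
  linarith
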